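/- For any r = t·M_w + k with 1 ≤ t ≤ n−1 and 0 < k ≤ M_w, the number of x ∈ 𝔽_q^N with w_{(P,w,π)}(x) = r is |A_r| = Σ_{i=0}^{t} Σ_{j=1}^{n} Σ_{I ∈ 𝓘_j^{j+i}} Σ_{(b_1,…,b_j) ∈ PRT_i[r] having exactly j parts} Σ_{(b_{m_1},…,b_{m_j}) ∈ ARG[(b_1,…,b_j)]} |D_{b_{m_1}}^{k_{i_1}}|⋯|D_{b_{m_j}}^{k_{i_j}}| · q^{k_{l_1}+k_{l_2}+⋯+k_{l_i}}, where for I ∈ 𝓘_j^{j+i} we write Max(I) = {i_1,…,i_j} and I ∖ Max(I) = {l_1,…,l_i}. -/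

import Mathlib

open scoped Classical

noncomputable section

variable {F : Type*} [Field F] [Fintype F]
variable {ι : Type*} [Fintype ι] [PartialOrder ι]

/-- The block weight induced by `w`: the maximum of the weights of the coordinates. -/
def blockWt (w : F → ℕ) {m : ℕ} (v : Fin m → F) : ℕ :=
  Finset.univ.sup fun t => w (v t)

/-- `M_w`, the maximum weight of an element of `F`. -/
def maxWt (w : F → ℕ) : ℕ := Finset.univ.sup w

/-- `D_r = {α ∈ F : w(α) = r}`. -/
def Dset (w : F → ℕ) (r : ℕ) : Finset F := Finset.univ.filter fun a => w a = r

/-- `D_r^k = {v ∈ F^k : w̃^k(v) = r}`. -/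
def Dk (w : F → ℕ) (m r : ℕ) : Finset (Fin m → F) :=
  Finset.univ.filter fun v => blockWt w v = r

/-- The order ideal (down-set) of the poset generated by a finite set `A`. -/
def genIdeal (A : Finset ι) : Finset ι := Finset.univ.filter fun i => ∃ j ∈ A, i ≤ j

/-- The set of maximal elements of a finite set `I`. -/
def maxElems (I : Finset ι) : Finset ι := I.filter fun i => ∀ j ∈ I, i ≤ j → j = i

/-- `I` is an order ideal (down-set) of the poset. -/
def IsIdeal (I : Finset ι) : Prop := ∀ a b : ι, a ≤ b → b ∈ I → a ∈ I

/-- The collection `𝓘_j^i` of ideals of cardinality `i` with exactly `j` maximal elements. -/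
def idealsWithMax (ι : Type*) [Fintype ι] [PartialOrder ι] (j i : ℕ) : Finset (Finset ι) :=
  Finset.univ.filter fun I => IsIdeal I ∧ I.card = i ∧ (maxElems I).card = j

/-- The π-support of a block vector. -/
def suppPi (k : ι → ℕ) (x : ∀ i, Fin (k i) → F) : Finset ι :=
  Finset.univ.filter fun i => x i ≠ 0

/-- The `(P,w,π)`-weight. -/
def wtP (w : F → ℕ) (k : ι → ℕ) (x : ∀ i, Fin (k i) → F) : ℕ :=
  ∑ i ∈ maxElems (genIdeal (suppPi k x)), blockWt w (x i)
    + maxWt w * ((genIdeal (suppPi k x)) \ maxElems (genIdeal (suppPi k x))).card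

/-- The `(P,w,π)`-distance. -/
def dP (w : F → ℕ) (k : ι → ℕ) (x y : ∀ i, Fin (k i) → F) : ℕ := wtP w k (x - y)

/-- A partition with `|M|` parts, each in `{1,…,R}`, together with an arrangement of its parts
on the set `M` (of maximal elements of an ideal), encoded as the function assigning to each
element of `M` the part placed there; the parts sum to `s` and the function vanishes off `M`. -/
def ARG (M : Finset ι) (R s : ℕ) : Finset (ι → Fin (R + 1)) :=
  Finset.univ.filter fun c =>
    (∀ i ∈ M, 1 ≤ (c i : ℕ)) ∧ (∀ i ∉ M, (c i : ℕ) = 0) ∧ ∑ i ∈ M, (c i : ℕ) = s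

/-
Fix the ideal `I = I_x` generated by the support of `x`. A set generates `I` exactly when it lies
between `Max(I)` and `I`, so `x` ranges over a box: nonzero blocks on `Max(I)`, arbitrary blocks on
`I ∖ Max(I)`, zero elsewhere. The weights of the maximal blocks form an arrangement, and
prescribing it leaves a box whose cardinality is a product. The maximal blocks contribute a
positive amount to the weight of `x ≠ 0`, so for `w_{(P,w,π)}(x) = t·M_w + k₀` with
`0 < k₀ ≤ M_w` at most `t` elements of `I` are not maximal.
-/

section

open Finset

theorem mem_genIdeal {A : Finset ι} {i : ι} : i ∈ genIdeal A ↔ ∃ j ∈ A, i ≤ j := by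
  simp [genIdeal]

theorem isIdeal_genIdeal (A : Finset ι) : IsIdeal (genIdeal A) := by
  intro a b hab hb
  obtain ⟨j, hj, hbj⟩ := mem_genIdeal.1 hb
  exact mem_genIdeal.2 ⟨j, hj, hab.trans hbj⟩

theorem mem_maxElems {I : Finset ι} {i : ι} : i ∈ maxElems I ↔ Maximal (· ∈ I) i := by
  rw [maxElems, mem_filter, maximal_iff]
  exact and_congr_right fun _ =>
    ⟨fun h j hj hij => (h j hj hij).symm, fun h j hj hij => (h hj hij).symm⟩

theorem maxElems_subset (I : Finset ι) : maxElems I ⊆ I :=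
  filter_subset _ _

theorem exists_mem_maxElems_le {I : Finset ι} {i : ι} (hi : i ∈ I) : ∃ m ∈ maxElems I, i ≤ m := by
  obtain ⟨m, him, hm⟩ := I.exists_le_maximal hi
  exact ⟨m, mem_maxElems.2 hm, him⟩

theorem maxElems_nonempty_iff {I : Finset ι} : (maxElems I).Nonempty ↔ I.Nonempty := by
  refine ⟨fun h => h.mono (maxElems_subset I), ?_⟩
  rintro ⟨i, hi⟩
  obtain ⟨m, hm, -⟩ := exists_mem_maxElems_le hi
  exact ⟨m, hm⟩

theorem genIdeal_eq_iff {A I : Finset ι} (hI : IsIdeal I) :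
    genIdeal A = I ↔ maxElems I ⊆ A ∧ A ⊆ I := by
  constructor
  · rintro rfl
    have subset_genIdeal : A ⊆ genIdeal A := fun a ha => mem_genIdeal.2 ⟨a, ha, le_rfl⟩
    refine ⟨fun m hm => ?_, subset_genIdeal⟩
    have hmax := mem_maxElems.1 hm
    obtain ⟨j, hj, hmj⟩ := mem_genIdeal.1 hmax.prop
    rwa [hmax.eq_of_le (subset_genIdeal hj) hmj]
  · rintro ⟨hmax, hA⟩
    ext a
    rw [mem_genIdeal]
    constructor
    · rintro ⟨j, hj, haj⟩
      exact hI a j haj (hA hj)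
    · intro ha
      obtain ⟨m, hm, ham⟩ := exists_mem_maxElems_le ha
      exact ⟨m, hmax hm, ham⟩

theorem mem_idealsWithMax_add {i j : ℕ} {I : Finset ι} :
    I ∈ idealsWithMax ι j (j + i) ↔
      IsIdeal I ∧ #(maxElems I) = j ∧ #(I \ maxElems I) = i := by
  have hcard := card_sdiff_add_card_eq_card (maxElems_subset I)
  simp only [idealsWithMax, mem_filter, mem_univ, true_and]
  exact and_congr_right fun _ => by omega

theorem sum_idealsWithMax {M : Type*} [AddCommMonoid M] (n : ℕ) (f : ℕ → Finset ι → M) :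
    ∑ i ∈ range n, ∑ j ∈ Icc 1 (Fintype.card ι), ∑ I ∈ idealsWithMax ι j (j + i), f i I =
      ∑ I : Finset ι with IsIdeal I ∧ I.Nonempty ∧ #(I \ maxElems I) < n,
        f #(I \ maxElems I) I := by
  rw [← sum_fiberwise_of_maps_to (g := fun I => #(I \ maxElems I)) (t := range n)
    fun I hI => mem_range.2 ((mem_filter_univ I).1 hI).2.2]
  refine sum_congr rfl fun i hi => ?_
  rw [← sum_fiberwise_of_maps_to (g := fun I => #(maxElems I)) (t := Icc 1 (Fintype.card ι))]
  · refine sum_congr rfl fun j hj => sum_congr (ext fun I => ?_) fun I hI => ?_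
    · simp only [mem_idealsWithMax_add, mem_filter, mem_univ, true_and]
      constructor
      · rintro ⟨hI, rfl, rfl⟩
        have hpos : 0 < #(maxElems I) := (mem_Icc.1 hj).1
        exact ⟨⟨⟨hI, maxElems_nonempty_iff.1 (card_pos.1 hpos), mem_range.1 hi⟩, rfl⟩, rfl⟩
      · rintro ⟨⟨⟨hI, -⟩, hi⟩, hj⟩
        exact ⟨hI, hj, hi⟩
    · rw [(mem_filter.1 (mem_filter.1 hI).1).2]
  · intro I hI
    have hne : I.Nonempty := ((mem_filter_univ I).1 (mem_filter.1 hI).1).2.1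
    exact mem_Icc.2 ⟨card_pos.2 (maxElems_nonempty_iff.2 hne), card_le_univ _⟩

theorem mem_suppPi {α κ : Type*} [Field α] [Fintype κ] {k : κ → ℕ} {x : ∀ i, Fin (k i) → α}
    {i : κ} : i ∈ suppPi k x ↔ x i ≠ 0 := by
  simp [suppPi]

theorem mem_Dk {α : Type*} [Fintype α] {w : α → ℕ} {m r : ℕ} {v : Fin m → α} :
    v ∈ Dk w m r ↔ blockWt w v = r := by
  simp [Dk]

theorem blockWt_le_maxWt {α : Type*} [Fintype α] (w : α → ℕ) {m : ℕ} (v : Fin m → α) :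
    blockWt w v ≤ maxWt w :=
  Finset.sup_le fun t _ => le_sup (f := w) (mem_univ (v t))

theorem blockWt_eq_zero {α : Type*} [Zero α] {w : α → ℕ} (hw0 : ∀ a, w a = 0 ↔ a = 0)
    {m : ℕ} {v : Fin m → α} : blockWt w v = 0 ↔ v = 0 := by
  rw [blockWt, ← bot_eq_zero, Finset.sup_eq_bot_iff]
  simp [hw0, funext_iff]

theorem blockWt_pos_iff {α : Type*} [Zero α] {w : α → ℕ} (hw0 : ∀ a, w a = 0 ↔ a = 0)
    {m : ℕ} {v : Fin m → α} : 0 < blockWt w v ↔ v ≠ 0 := by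
  rw [Nat.pos_iff_ne_zero, Ne, blockWt_eq_zero hw0]

/-- The ideal `I_x` generated by the π-support of a block vector `x`. -/
def idealOf (k : ι → ℕ) (x : ∀ i, Fin (k i) → F) : Finset ι := genIdeal (suppPi k x)

theorem isIdeal_idealOf {α : Type*} [Field α] (k : ι → ℕ) (x : ∀ i, Fin (k i) → α) :
    IsIdeal (idealOf k x) :=
  isIdeal_genIdeal _

theorem blockWt_pos_of_mem_maxElems {α : Type*} [Field α] {w : α → ℕ}
    (hw0 : ∀ a, w a = 0 ↔ a = 0) {k : ι → ℕ} {x : ∀ i, Fin (k i) → α} {i : ι}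
    (hi : i ∈ maxElems (idealOf k x)) : 0 < blockWt w (x i) :=
  (blockWt_pos_iff hw0).2 <| mem_suppPi.1 <| ((genIdeal_eq_iff (isIdeal_idealOf k x)).1 rfl).1 hi

theorem wtP_eq_add_of_idealOf_eq (w : F → ℕ) {k : ι → ℕ} {x : ∀ i, Fin (k i) → F} {I : Finset ι}
    (hx : idealOf k x = I) :
    wtP w k x = ∑ i ∈ maxElems I, blockWt w (x i) + maxWt w * #(I \ maxElems I) := by
  subst hx
  rfl

theorem idealOf_nonempty_of_wtP_pos {w : F → ℕ} {k : ι → ℕ} {x : ∀ i, Fin (k i) → F}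
    (hx : 0 < wtP w k x) : (idealOf k x).Nonempty := by
  rw [nonempty_iff_ne_empty]
  intro hempty
  simp [wtP_eq_add_of_idealOf_eq w hempty, maxElems] at hx

theorem maxWt_mul_card_lt_wtP {w : F → ℕ} (hw0 : ∀ a : F, w a = 0 ↔ a = 0) {k : ι → ℕ}
    {x : ∀ i, Fin (k i) → F} (hx : 0 < wtP w k x) :
    maxWt w * #(idealOf k x \ maxElems (idealOf k x)) < wtP w k x := by
  have hsum : 0 < ∑ i ∈ maxElems (idealOf k x), blockWt w (x i) :=
    sum_pos (fun _ hi => blockWt_pos_of_mem_maxElems hw0 hi)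
      (maxElems_nonempty_iff.2 (idealOf_nonempty_of_wtP_pos hx))
  rw [wtP_eq_add_of_idealOf_eq w rfl]
  exact Nat.lt_add_of_pos_left hsum

/-- The arrangement (see `ARG`) given by the block weights of `x` on the maximal
elements of `I`; like the members of `ARG` it is extended by `0` off `Max(I)`. -/
def arrangement (w : F → ℕ) (k : ι → ℕ) (I : Finset ι) (x : ∀ i, Fin (k i) → F) :
    ι → Fin (maxWt w + 1) :=
  fun i => if i ∈ maxElems I then ⟨blockWt w (x i), Nat.lt_succ_of_le (blockWt_le_maxWt w _)⟩ else 0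

theorem arrangement_eq_iff {α : Type*} [Fintype α] {w : α → ℕ} {k : ι → ℕ} {I : Finset ι}
    {x : ∀ i, Fin (k i) → α} {c : ι → Fin (maxWt w + 1)} (hc : ∀ i ∉ maxElems I, (c i : ℕ) = 0) :
    arrangement w k I x = c ↔ ∀ i ∈ maxElems I, blockWt w (x i) = c i := by
  rw [funext_iff]
  refine forall_congr' fun i => ?_
  by_cases hi : i ∈ maxElems I
  · simp [arrangement, hi, Fin.ext_iff]
  · simp [arrangement, hi, Fin.ext_iff, hc i hi]

theorem arrangement_mem_ARG_iff {w : F → ℕ} (hw0 : ∀ a : F, w a = 0 ↔ a = 0) {k : ι → ℕ}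
    {I : Finset ι} {x : ∀ i, Fin (k i) → F} (hx : idealOf k x = I) {s : ℕ} :
    arrangement w k I x ∈ ARG (maxElems I) (maxWt w) s ↔
      wtP w k x = maxWt w * #(I \ maxElems I) + s := by
  have hon : ∀ i ∈ maxElems I, (arrangement w k I x i : ℕ) = blockWt w (x i) := fun i hi => by
    simp [arrangement, hi]
  have hoff : ∀ i ∉ maxElems I, (arrangement w k I x i : ℕ) = 0 := fun i hi => by
    simp [arrangement, hi]
  have hpos : ∀ i ∈ maxElems I, 1 ≤ (arrangement w k I x i : ℕ) := fun i hi => by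
    rw [hon i hi]
    exact blockWt_pos_of_mem_maxElems hw0 (hx ▸ hi)
  have hsum : ∑ i ∈ maxElems I, (arrangement w k I x i : ℕ) = s ↔
      wtP w k x = maxWt w * #(I \ maxElems I) + s := by
    rw [sum_congr rfl hon, wtP_eq_add_of_idealOf_eq w hx]
    omega
  rw [ARG, mem_filter_univ, ← hsum]
  exact ⟨fun h => h.2.2, fun h => ⟨hpos, hoff, h⟩⟩

/-- The box of block vectors supported on `I` whose block weights on the maximal elements of `I`
are prescribed by `c`. -/
def weightBox (w : F → ℕ) (k : ι → ℕ) (I : Finset ι) (c : ι → ℕ) :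
    Finset (∀ i, Fin (k i) → F) :=
  Fintype.piFinset fun i => if i ∈ maxElems I then Dk w (k i) (c i) else if i ∈ I then univ else {0}

theorem card_weightBox (w : F → ℕ) (k : ι → ℕ) (I : Finset ι) (c : ι → ℕ) :
    #(weightBox w k I c) =
      (∏ i ∈ maxElems I, #(Dk w (k i) (c i))) * Fintype.card F ^ ∑ i ∈ I \ maxElems I, k i := by
  rw [weightBox, Fintype.card_piFinset, ← prod_subset (subset_univ I),
    ← prod_sdiff (maxElems_subset I), mul_comm, ← prod_pow_eq_pow_sum]
  · congr 1
    · exact prod_congr rfl fun i hi => by rw [if_pos hi]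
    · refine prod_congr rfl fun i hi => ?_
      obtain ⟨hiI, hi⟩ := mem_sdiff.1 hi
      simp [hiI, hi]
  · intro i _ hiI
    simp [hiI, mt (@maxElems_subset _ _ _ I i) hiI]

theorem mem_weightBox {w : F → ℕ} {k : ι → ℕ} {I : Finset ι} {c : ι → ℕ}
    {x : ∀ i, Fin (k i) → F} :
    x ∈ weightBox w k I c ↔ (∀ i ∈ maxElems I, blockWt w (x i) = c i) ∧ suppPi k x ⊆ I := by
  rw [weightBox, Fintype.mem_piFinset, subset_iff, ← forall_and]
  refine forall_congr' fun i => ?_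
  by_cases hi : i ∈ maxElems I
  · simp [hi, maxElems_subset I hi, mem_Dk]
  · by_cases hiI : i ∈ I <;> simp [hi, hiI, mem_suppPi]

theorem mem_weightBox_iff_of_mem_ARG {w : F → ℕ} (hw0 : ∀ a : F, w a = 0 ↔ a = 0) {k : ι → ℕ}
    {I : Finset ι} (hI : IsIdeal I) {c : ι → Fin (maxWt w + 1)} {s : ℕ}
    (hc : c ∈ ARG (maxElems I) (maxWt w) s) {x : ∀ i, Fin (k i) → F} :
    x ∈ weightBox w k I (fun i => c i) ↔ idealOf k x = I ∧ arrangement w k I x = c := by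
  obtain ⟨-, hpos, hoff, -⟩ := mem_filter.1 hc
  rw [mem_weightBox, arrangement_eq_iff hoff, idealOf, genIdeal_eq_iff hI]
  have hsupp (hx : ∀ i ∈ maxElems I, blockWt w (x i) = c i) : maxElems I ⊆ suppPi k x :=
    fun i hi => mem_suppPi.2 <| (blockWt_pos_iff hw0).1 <| hx i hi ▸ hpos i hi
  tauto

theorem card_filter_wtP_eq_and_idealOf_eq {w : F → ℕ} (hw0 : ∀ a : F, w a = 0 ↔ a = 0)
    (k : ι → ℕ) {I : Finset ι} (hI : IsIdeal I) (s : ℕ) :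
    #{x : ∀ i, Fin (k i) → F | wtP w k x = maxWt w * #(I \ maxElems I) + s ∧ idealOf k x = I} =
      ∑ c ∈ ARG (maxElems I) (maxWt w) s,
        (∏ i ∈ maxElems I, #(Dk w (k i) (c i : ℕ))) *
          Fintype.card F ^ ∑ i ∈ I \ maxElems I, k i := by
  rw [card_eq_sum_card_fiberwise (f := arrangement w k I) (t := ARG (maxElems I) (maxWt w) s)]
  · refine sum_congr rfl fun c hc => ?_
    rw [← card_weightBox w k I fun i => c i, filter_filter]
    congr 1
    ext x
    rw [mem_filter_univ, mem_weightBox_iff_of_mem_ARG hw0 hI hc]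
    constructor
    · rintro ⟨⟨-, hx⟩, hxc⟩
      exact ⟨hx, hxc⟩
    · rintro ⟨hx, rfl⟩
      exact ⟨⟨(arrangement_mem_ARG_iff hw0 hx).1 hc, hx⟩, rfl⟩
  · intro x hx
    obtain ⟨hwt, hx⟩ := (mem_filter_univ x).1 hx
    exact (arrangement_mem_ARG_iff hw0 hx).2 hwt

theorem stmt3_general (w : F → ℕ) (hw0 : ∀ a : F, w a = 0 ↔ a = 0) (k : ι → ℕ) (t k₀ : ℕ)
    (hk1 : 0 < k₀) (hk2 : k₀ ≤ maxWt w) :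
    #{x : ∀ i, Fin (k i) → F | wtP w k x = t * maxWt w + k₀} =
      ∑ i ∈ range (t + 1), ∑ j ∈ Icc 1 (Fintype.card ι), ∑ I ∈ idealsWithMax ι j (j + i),
        ∑ c ∈ ARG (maxElems I) (maxWt w) (t * maxWt w + k₀ - i * maxWt w),
          (∏ s ∈ maxElems I, #(Dk w (k s) (c s : ℕ))) *
            Fintype.card F ^ ∑ l ∈ I \ maxElems I, k l := by
  rw [sum_idealsWithMax, card_eq_sum_card_fiberwise (f := idealOf k)]
  · refine sum_congr rfl fun I hI => ?_
    obtain ⟨hI, -, hlt⟩ := (mem_filter_univ I).1 hI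
    have hle : #(I \ maxElems I) * maxWt w ≤ t * maxWt w :=
      Nat.mul_le_mul_right _ (Nat.lt_succ_iff.1 hlt)
    rw [filter_filter, ← card_filter_wtP_eq_and_idealOf_eq hw0 k hI, mul_comm (maxWt w),
      Nat.add_sub_of_le (hle.trans (Nat.le_add_right _ _))]
  · intro x hx
    replace hx := (mem_filter_univ x).1 hx
    have hpos : 0 < wtP w k x := by omega
    refine (mem_filter_univ _).2
      ⟨isIdeal_idealOf k x, idealOf_nonempty_of_wtP_pos hpos, ?_⟩
    refine Nat.lt_of_mul_lt_mul_left (a := maxWt w) ?_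
    calc maxWt w * #(idealOf k x \ maxElems (idealOf k x)) < wtP w k x :=
          maxWt_mul_card_lt_wtP hw0 hpos
      _ ≤ maxWt w * (t + 1) := by rw [hx]; linarith

end

/-- the number of vectors of `(P,w,π)`-weight `r = t·M_w + k₀` with
`1 ≤ t ≤ n-1` and `0 < k₀ ≤ M_w`. -/
theorem stmt3 (w : F → ℕ) (hw0 : ∀ a : F, w a = 0 ↔ a = 0)
    (hwneg : ∀ a : F, w (-a) = w a) (hwadd : ∀ a b : F, w (a + b) ≤ w a + w b)
    (k : ι → ℕ) (t k₀ : ℕ) (ht1 : 1 ≤ t) (ht2 : t ≤ Fintype.card ι - 1)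
    (hk1 : 0 < k₀) (hk2 : k₀ ≤ maxWt w) :
    (Finset.univ.filter fun x : ∀ i, Fin (k i) → F =>
        wtP w k x = t * maxWt w + k₀).card =
      ∑ i ∈ Finset.range (t + 1), ∑ j ∈ Finset.Icc 1 (Fintype.card ι),
        ∑ I ∈ idealsWithMax ι j (j + i),
          ∑ c ∈ ARG (maxElems I) (maxWt w) (t * maxWt w + k₀ - i * maxWt w),
            (∏ s ∈ maxElems I, (Dk w (k s) (c s : ℕ)).card) *
              Fintype.card F ^ (∑ l ∈ (I \ maxElems I), k l) :=
  stmt3_general w hw0 k t k₀ hk1 hk2
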